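/- arXiv:2111.11494 — 2 statements merged into one kernel-verified Lean document; each statement's English description precedes it below -/
import Mathlib

section
/- Let m, n be positive integers. For all integers p, j ≥ 0, the quantities A^m_β = ∏_{k=1}^β [k(m+2)−1][k(m+2)] and A^n_β = ∏_{k=1}^β [k(n+2)−1][k(n+2)] satisfy the inequality A^m_{p+j} / (A^m_p · A^n_j) ≤ ((m+2)/(m+1))^p · ((m+2)²/((n+2)(n+1)))^j · ((p+j)!/(p!·j!))². -/
open scoped BigOperators

/-- `A_β^α = ∏_{k=1}^β [k(α+2)−1][k(α+2)]`, with `A_0^α = 1`. -/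
def Acoef (α β : ℕ) : ℕ := ∏ k ∈ Finset.Icc 1 β, ((k * (α + 2) - 1) * (k * (α + 2)))

/-!
Each factor of `A^α_β` satisfies `k²(α+1)(α+2) ≤ [k(α+2)−1][k(α+2)] ≤ k²(α+2)²`. After cancelling
`A^m_p`, apply the upper bound to the `j` factors left in `A^m_{p+j}` and the lower bound to those
of `A^n_j`: the squares `k²` combine to the square of a binomial coefficient. The remaining
power of `(m+2)/(m+1)` is at least `1`.
-/

theorem Acoef_succ (α β : ℕ) :
    Acoef α (β + 1) = Acoef α β * (((β + 1) * (α + 2) - 1) * ((β + 1) * (α + 2))) :=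
  Finset.prod_Icc_succ_top (by lia) _

theorem Acoef_add_le (α p j : ℕ) :
    Acoef α (p + j) ≤ Acoef α p * (((α + 2) ^ 2) ^ j * (p + 1).ascFactorial j ^ 2) := by
  induction j with
  | zero => simp
  | succ j ih =>
    calc Acoef α (p + j + 1)
        = Acoef α (p + j) * (((p + j + 1) * (α + 2) - 1) * ((p + j + 1) * (α + 2))) :=
          Acoef_succ α (p + j)
      _ ≤ Acoef α p * (((α + 2) ^ 2) ^ j * (p + 1).ascFactorial j ^ 2) *
            (((p + j + 1) * (α + 2)) * ((p + j + 1) * (α + 2))) := by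
          gcongr
          exact Nat.sub_le _ _
      _ = Acoef α p * (((α + 2) ^ 2) ^ (j + 1) * (p + 1).ascFactorial (j + 1) ^ 2) := by
          rw [Nat.ascFactorial_succ]
          ring

theorem pow_mul_factorial_sq_le_Acoef (α β : ℕ) :
    ((α + 2) * (α + 1)) ^ β * β.factorial ^ 2 ≤ Acoef α β := by
  induction β with
  | zero => simp [Acoef]
  | succ β ih =>
    have factor_le : (β + 1) * (α + 1) ≤ (β + 1) * (α + 2) - 1 :=
      Nat.le_sub_one_of_lt (by gcongr; lia)
    calc ((α + 2) * (α + 1)) ^ (β + 1) * (β + 1).factorial ^ 2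
        = ((α + 2) * (α + 1)) ^ β * β.factorial ^ 2 *
            (((β + 1) * (α + 1)) * ((β + 1) * (α + 2))) := by
          rw [Nat.factorial_succ]
          ring
      _ ≤ Acoef α β * (((β + 1) * (α + 2) - 1) * ((β + 1) * (α + 2))) := by gcongr
      _ = Acoef α (β + 1) := (Acoef_succ α β).symm

theorem Acoef_pos (α β : ℕ) : 0 < Acoef α β :=
  lt_of_lt_of_le (by positivity) (pow_mul_factorial_sq_le_Acoef α β)

theorem Acoef_ratio_bound_general (m n p j : ℕ) :
    (Acoef m (p + j) : ℝ) / ((Acoef m p : ℝ) * (Acoef n j : ℝ)) ≤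
      ((m + 2 : ℝ) ^ 2 / ((n + 2 : ℝ) * (n + 1))) ^ j * ((p + j).choose j : ℝ) ^ 2 := by
  have upper : (Acoef m (p + j) : ℝ) ≤
      Acoef m p * (((m + 2 : ℝ) ^ 2) ^ j * (j.factorial * (p + j).choose j) ^ 2) := by
    exact_mod_cast Nat.ascFactorial_eq_factorial_mul_choose p j ▸ Acoef_add_le m p j
  have lower : ((n + 2 : ℝ) * (n + 1)) ^ j * (j.factorial : ℝ) ^ 2 ≤ Acoef n j := by
    exact_mod_cast pow_mul_factorial_sq_le_Acoef n j
  have Acoef_m_pos : (0 : ℝ) < Acoef m p := by exact_mod_cast Acoef_pos m p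
  calc (Acoef m (p + j) : ℝ) / (Acoef m p * Acoef n j)
      ≤ Acoef m p * (((m + 2 : ℝ) ^ 2) ^ j * (j.factorial * (p + j).choose j) ^ 2) /
          (Acoef m p * (((n + 2 : ℝ) * (n + 1)) ^ j * (j.factorial : ℝ) ^ 2)) := by gcongr
    _ = ((m + 2 : ℝ) ^ 2 / ((n + 2 : ℝ) * (n + 1))) ^ j * ((p + j).choose j : ℝ) ^ 2 := by
        rw [div_pow]
        field_simp

/-- estimate \eqref{combinatorial}. For positive integers `m, n` and all
`p, j ≥ 0`:
`A^m_{p+j}/(A^m_p A^n_j) ≤ ((m+2)/(m+1))^p ((m+2)²/((n+2)(n+1)))^j ((p+j)!/(p!j!))²`. -/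
theorem Acoef_ratio_bound (m n : ℕ) (hm : 0 < m) (hn : 0 < n) (p j : ℕ) :
    (Acoef m (p + j) : ℝ) / ((Acoef m p : ℝ) * (Acoef n j : ℝ)) ≤
      ((m + 2 : ℝ) / (m + 1)) ^ p * ((m + 2 : ℝ) ^ 2 / ((n + 2 : ℝ) * (n + 1))) ^ j
        * ((Nat.factorial (p + j) : ℝ) / ((Nat.factorial p : ℝ) * (Nat.factorial j : ℝ))) ^ 2 := by
  have one_le_ratio : (1 : ℝ) ≤ (m + 2) / (m + 1) := (one_le_div (by positivity)).2 (by linarith)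
  rw [mul_assoc, ← Nat.cast_add_choose, Nat.choose_symm_add]
  exact (Acoef_ratio_bound_general m n p j).trans
    (le_mul_of_one_le_left (by positivity) (one_le_pow₀ one_le_ratio))
end

section
/- Let m, n be positive integers, ε = 1 or −1, and let w be a real-analytic solution of x^m w_yy + ε y^n w_xx = 0 on a square |x| < R, |y| < R, with expansion w(x,y) = Σ_{j=0}^∞ α_j(x) y^j. Then for every integer p ≥ 0 and every x with 0 < |x| < R: α_{p(n+2)}(x) = ((−ε)^p / A^n_p) (D^p α_0)(x) and α_{p(n+2)+1}(x) = ((−ε)^p / B^n_p) (D^p α_1)(x), where D is the operator (Df)(x) = x^{−m} f''(x), D^p is its p-th iterate, A^n_p = ∏_{k=1}^p [k(n+2)−1][k(n+2)], and B^n_p = ∏_{k=1}^p [k(n+2)][k(n+2)+1] (with A^n_0 = B^n_0 = 1). -/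
open scoped BigOperators

noncomputable section

/-- Dot product of two 3-vectors (ℂ-bilinear extension when over ℂ). -/
def dot3 {R : Type*} [CommRing R] (v w : Fin 3 → R) : R :=
  v 0 * w 0 + v 1 * w 1 + v 2 * w 2

/-- Cross product of two 3-vectors (ℂ-bilinear extension when over ℂ). -/
def cross3 {R : Type*} [CommRing R] (v w : Fin 3 → R) : Fin 3 → R :=
  ![v 1 * w 2 - v 2 * w 1, v 2 * w 0 - v 0 * w 2, v 0 * w 1 - v 1 * w 0]

/-- Euclidean norm of a real 3-vector. -/
def enorm3 (v : Fin 3 → ℝ) : ℝ := Real.sqrt (dot3 v v)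

/-- Partial derivative with respect to the first variable `s`. -/
def pds {E : Type*} [NormedAddCommGroup E] [NormedSpace ℝ E]
    (f : ℝ × ℝ → E) (p : ℝ × ℝ) : E :=
  deriv (fun s => f (s, p.2)) p.1

/-- Partial derivative with respect to the second variable `t`. -/
def pdt {E : Type*} [NormedAddCommGroup E] [NormedSpace ℝ E]
    (f : ℝ × ℝ → E) (p : ℝ × ℝ) : E :=
  deriv (fun t => f (p.1, t)) p.2

/-- Componentwise `s`-derivative of a 3-vector valued map. -/
def vds (V : ℝ × ℝ → Fin 3 → ℝ) (p : ℝ × ℝ) : Fin 3 → ℝ := fun i => pds (fun q => V q i) p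

/-- Componentwise `t`-derivative of a 3-vector valued map. -/
def vdt (V : ℝ × ℝ → Fin 3 → ℝ) (p : ℝ × ℝ) : Fin 3 → ℝ := fun i => pdt (fun q => V q i) p

/-- `B_β^α = ∏_{k=1}^β [k(α+2)][k(α+2)+1]`, with `B_0^α = 1`. -/
def Bcoef (α β : ℕ) : ℕ := ∏ k ∈ Finset.Icc 1 β, ((k * (α + 2)) * (k * (α + 2) + 1))

/-- The operator `D f (x) = f''(x) / x^m`, defined for `x ≠ 0`. -/
def DopR (m : ℕ) (f : ℝ → ℝ) : ℝ → ℝ := fun x => deriv (deriv f) x / x ^ m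

/-!
Differentiating `x ^ m * w_yy = -ε * y ^ n * w_xx` exactly `k + n` times in `y` and setting `y = 0`
kills every term of the Leibniz expansion of the right-hand side except the one in which `y ^ n` is
differentiated `n` times. Since `∂_y` commutes with `∂_x`, this compares the Taylor coefficients
`α (k + n + 2)` and `D (α k)` on a line `x = const`; the formula iterates this comparison.
-/

open Filter Topology
open scoped ContDiff Nat

section IteratedDeriv

variable {𝕜 : Type*} [NontriviallyNormedField 𝕜]

theorem iteratedDeriv_zero_of_eventually_hasSum [CompleteSpace 𝕜] {c : ℕ → 𝕜} {f : 𝕜 → 𝕜}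
    (hf : ∀ᶠ y in 𝓝 0, HasSum (fun j => c j * y ^ j) (f y)) (j : ℕ) :
    iteratedDeriv j f 0 = j ! * c j := by
  have hseries : HasFPowerSeriesAt f (FormalMultilinearSeries.ofScalars 𝕜 c) 0 := by
    rw [hasFPowerSeriesAt_iff]
    filter_upwards [hf] with y hy
    simpa [FormalMultilinearSeries.coeff_ofScalars, mul_comm] using hy
  obtain ⟨r, hr⟩ := hseries
  rw [iteratedDeriv_eq_iteratedFDeriv, ← hr.factorial_smul 1 j]
  simp

theorem iteratedDeriv_pow_mul_zero {f : 𝕜 → 𝕜} {n k : ℕ} (hf : ContDiffAt 𝕜 (k + n : ℕ) f 0) :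
    iteratedDeriv (k + n) (fun y => y ^ n * f y) 0 =
      (k + n).descFactorial n * iteratedDeriv k f 0 := by
  have leibniz := iteratedDeriv_mul (f := fun y : 𝕜 => y ^ n) (by fun_prop) hf
  simp only [iteratedDeriv_fun_pow_zero] at leibniz
  rw [Finset.sum_eq_single_of_mem n (by simp) (fun i _ hi => by simp [hi])] at leibniz
  simpa [Nat.descFactorial_eq_factorial_mul_choose, mul_comm, Pi.mul_def] using leibniz

end IteratedDeriv

section PartialDerivatives

variable {E : Type*} [NormedAddCommGroup E] [NormedSpace ℝ E] {f g : ℝ × ℝ → E} {p : ℝ × ℝ}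

theorem pds_eq_fderiv (hf : DifferentiableAt ℝ f p) : pds f p = fderiv ℝ f p (1, 0) :=
  (hf.hasFDerivAt.comp_hasDerivAt p.1
    ((hasDerivAt_id p.1).prodMk (hasDerivAt_const p.1 p.2))).deriv

theorem pdt_eq_fderiv (hf : DifferentiableAt ℝ f p) : pdt f p = fderiv ℝ f p (0, 1) :=
  (hf.hasFDerivAt.comp_hasDerivAt p.2
    ((hasDerivAt_const p.2 p.1).prodMk (hasDerivAt_id p.2))).deriv

theorem pds_eventuallyEq_fderiv (hf : ContDiffAt ℝ 1 f p) :
    pds f =ᶠ[𝓝 p] fun q => fderiv ℝ f q (1, 0) :=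
  (hf.eventually (by simp)).mono fun _ hq => pds_eq_fderiv (hq.differentiableAt one_ne_zero)

theorem pdt_eventuallyEq_fderiv (hf : ContDiffAt ℝ 1 f p) :
    pdt f =ᶠ[𝓝 p] fun q => fderiv ℝ f q (0, 1) :=
  (hf.eventually (by simp)).mono fun _ hq => pdt_eq_fderiv (hq.differentiableAt one_ne_zero)

theorem pds_congr (h : f =ᶠ[𝓝 p] g) : pds f p = pds g p :=
  (h.comp_tendsto (Continuous.prodMk_left p.2).continuousAt).deriv_eq

theorem pdt_congr (h : f =ᶠ[𝓝 p] g) : pdt f p = pdt g p :=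
  (h.comp_tendsto (Continuous.prodMk_right p.1).continuousAt).deriv_eq

theorem pds_eventuallyEq (h : f =ᶠ[𝓝 p] g) : pds f =ᶠ[𝓝 p] pds g :=
  h.eventuallyEq_nhds.mono fun _ => pds_congr

theorem pdt_eventuallyEq (h : f =ᶠ[𝓝 p] g) : pdt f =ᶠ[𝓝 p] pdt g :=
  h.eventuallyEq_nhds.mono fun _ => pdt_congr

theorem contDiffAt_pds {k l : ℕ∞ω} (hf : ContDiffAt ℝ l f p) (hkl : k + 1 ≤ l) :
    ContDiffAt ℝ k (pds f) p :=
  ((hf.fderiv_right hkl).clm_apply contDiffAt_const).congr_of_eventuallyEq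
    (pds_eventuallyEq_fderiv (hf.of_le (le_add_self.trans hkl)))

theorem contDiffAt_pdt {k l : ℕ∞ω} (hf : ContDiffAt ℝ l f p) (hkl : k + 1 ≤ l) :
    ContDiffAt ℝ k (pdt f) p :=
  ((hf.fderiv_right hkl).clm_apply contDiffAt_const).congr_of_eventuallyEq
    (pdt_eventuallyEq_fderiv (hf.of_le (le_add_self.trans hkl)))

theorem contDiffAt_pdt_iterate (hf : ContDiffAt ℝ ∞ f p) (j : ℕ) :
    ContDiffAt ℝ ∞ (pdt^[j] f) p := by
  induction j with
  | zero => exact hf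
  | succ j ih => exact Function.iterate_succ_apply' pdt j f ▸ contDiffAt_pdt ih le_rfl

theorem fderiv_fderiv_apply (hf : ContDiffAt ℝ 2 f p) (u v : ℝ × ℝ) :
    fderiv ℝ (fun q => fderiv ℝ f q v) p u = fderiv ℝ (fderiv ℝ f) p u v := by
  have hdiff : DifferentiableAt ℝ (fderiv ℝ f) p :=
    (hf.fderiv_right (m := 1) (by norm_num)).differentiableAt one_ne_zero
  simp [fderiv_clm_apply hdiff (differentiableAt_const v)]

theorem pdt_pds_comm (hf : ContDiffAt ℝ 2 f p) : pdt (pds f) p = pds (pdt f) p := by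
  have hf₁ : ContDiffAt ℝ 1 f p := hf.of_le one_le_two
  have hpds : ContDiffAt ℝ 1 (pds f) p := contDiffAt_pds hf (by norm_num)
  have hpdt : ContDiffAt ℝ 1 (pdt f) p := contDiffAt_pdt hf (by norm_num)
  rw [pdt_eq_fderiv (hpds.differentiableAt one_ne_zero),
    pds_eq_fderiv (hpdt.differentiableAt one_ne_zero),
    (pds_eventuallyEq_fderiv hf₁).fderiv_eq, (pdt_eventuallyEq_fderiv hf₁).fderiv_eq,
    fderiv_fderiv_apply hf, fderiv_fderiv_apply hf]
  exact hf.isSymmSndFDerivAt (by simp) _ _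

theorem pdt_iterate_pds_eventuallyEq (hf : ContDiffAt ℝ ∞ f p) (j : ℕ) :
    pdt^[j] (pds f) =ᶠ[𝓝 p] pds (pdt^[j] f) := by
  induction j with
  | zero => rfl
  | succ j ih =>
    have hsmooth : ContDiffAt ℝ 2 (pdt^[j] f) p :=
      contDiffAt_infty.1 (contDiffAt_pdt_iterate hf j) 2
    simp only [Function.iterate_succ_apply']
    exact (pdt_eventuallyEq ih).trans ((hsmooth.eventually (by simp)).mono fun _ => pdt_pds_comm)

theorem pdt_iterate_pds_pds (hf : ContDiffAt ℝ ∞ f p) (j : ℕ) :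
    pdt^[j] (pds (pds f)) p = pds (pds (pdt^[j] f)) p :=
  (pdt_iterate_pds_eventuallyEq (contDiffAt_pds hf le_rfl) j).eq_of_nhds.trans
    (pds_congr (pdt_iterate_pds_eventuallyEq hf j))

theorem pdt_iterate_eq_iteratedDeriv (j : ℕ) (f : ℝ × ℝ → E) (x y : ℝ) :
    pdt^[j] f (x, y) = iteratedDeriv j (fun t => f (x, t)) y := by
  induction j generalizing y with
  | zero => simp
  | succ j ih => simp only [Function.iterate_succ_apply', pdt, ih, iteratedDeriv_succ]

end PartialDerivatives

theorem DopR_congr (m : ℕ) {f g : ℝ → ℝ} {x : ℝ} (h : f =ᶠ[𝓝 x] g) :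
    DopR m f x = DopR m g x := by
  simp only [DopR, h.deriv.deriv_eq]

theorem DopR_const_mul (m : ℕ) (c : ℝ) (f : ℝ → ℝ) (x : ℝ) :
    DopR m (fun s => c * f s) x = c * DopR m f x := by
  simp only [DopR, deriv_const_mul_field', mul_div_assoc]

/-- The common form of `A^n_p` (`r = 0`) and `B^n_p` (`r = 1`): the denominator in the formula for
the coefficient of `y ^ (p (n + 2) + r)`. Its factors come from `(y ^ N)'' = (N - 1) N y ^ (N - 2)`
with `N = k (n + 2) + r`; the subtraction never truncates, since `k ≥ 1`. -/
def recurrenceProd (n r p : ℕ) : ℕ :=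
  ∏ k ∈ Finset.Icc 1 p, ((k * (n + 2) + r - 1) * (k * (n + 2) + r))

theorem recurrenceProd_zero_eq_Acoef (n p : ℕ) : recurrenceProd n 0 p = Acoef n p := rfl

theorem recurrenceProd_one_eq_Bcoef (n p : ℕ) : recurrenceProd n 1 p = Bcoef n p := rfl

theorem recurrenceProd_succ (n r p : ℕ) :
    recurrenceProd n r (p + 1) = recurrenceProd n r p *
      ((p * (n + 2) + r + n + 1) * (p * (n + 2) + r + n + 2)) := by
  have hindex : (p + 1) * (n + 2) + r = p * (n + 2) + r + n + 2 := by ring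
  rw [recurrenceProd, Finset.prod_Icc_succ_top (by lia), hindex]
  rfl

theorem eqOn_iterate_DopR_of_recurrence {m n : ℕ} {ε : ℝ} {S : Set ℝ} (hS : IsOpen S)
    {α : ℕ → ℝ → ℝ}
    (hα : ∀ k, ∀ x ∈ S, α (k + n + 2) x = -ε / ((k + n + 1) * (k + n + 2)) * DopR m (α k) x)
    (r p : ℕ) :
    Set.EqOn (α (p * (n + 2) + r))
      (fun x => (-ε) ^ p / recurrenceProd n r p * (DopR m)^[p] (α r) x) S := by
  induction p with
  | zero => intro x _; simp [recurrenceProd]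
  | succ p ih =>
    intro x hx
    have hindex : (p + 1) * (n + 2) + r = p * (n + 2) + r + n + 2 := by ring
    rw [hindex, hα _ x hx, DopR_congr m (ih.eventuallyEq_of_mem (hS.mem_nhds hx)),
      DopR_const_mul, ← mul_assoc, div_mul_div_comm, ← pow_succ', recurrenceProd_succ]
    simp only [Function.iterate_succ_apply']
    push_cast
    ring_nf

section DegenerateEquation

variable {n : ℕ} {ε : ℝ} {w : ℝ × ℝ → ℝ}

theorem mul_pdt_iterate_add_two {a x : ℝ} (hw : ContDiffAt ℝ ∞ w (x, 0))
    (hsol : ∀ᶠ y in 𝓝 0, a * pdt (pdt w) (x, y) + ε * y ^ n * pds (pds w) (x, y) = 0) (k : ℕ) :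
    a * pdt^[k + n + 2] w (x, 0) =
      -ε * ((k + n).descFactorial n * pds (pds (pdt^[k] w)) (x, 0)) := by
  have hpde : (fun y => a * pdt (pdt w) (x, y)) =ᶠ[𝓝 0]
      fun y => -ε * (y ^ n * pds (pds w) (x, y)) := by
    filter_upwards [hsol] with y hy
    linear_combination hy
  have hw_xx : ContDiffAt ℝ ∞ (fun y => pds (pds w) (x, y)) 0 :=
    (contDiffAt_pds (contDiffAt_pds hw le_rfl) le_rfl).comp (0 : ℝ)
      (contDiff_prodMk_right x).contDiffAt
  have hdiff := hpde.iteratedDeriv_eq (k + n)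
  rwa [iteratedDeriv_const_mul_field, iteratedDeriv_const_mul_field,
    iteratedDeriv_pow_mul_zero (contDiffAt_infty.1 hw_xx _),
    ← pdt_iterate_eq_iteratedDeriv, ← pdt_iterate_eq_iteratedDeriv,
    pdt_iterate_pds_pds hw] at hdiff

theorem taylorCoeff_recurrence {m : ℕ} {x : ℝ} (hx : x ≠ 0) (hw : ContDiffAt ℝ ∞ w (x, 0))
    (hsol : ∀ᶠ y in 𝓝 0, x ^ m * pdt (pdt w) (x, y) + ε * y ^ n * pds (pds w) (x, y) = 0)
    {α : ℕ → ℝ → ℝ}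
    (hα : ∀ j, ∀ᶠ s in 𝓝 x, iteratedDeriv j (fun y => w (s, y)) 0 = j ! * α j s) (k : ℕ) :
    α (k + n + 2) x = -ε / ((k + n + 1) * (k + n + 2)) * DopR m (α k) x := by
  have hcoeff (j : ℕ) : (fun s => pdt^[j] w (s, 0)) =ᶠ[𝓝 x] fun s => j ! * α j s :=
    (hα j).mono fun s hs => (pdt_iterate_eq_iteratedDeriv j w s 0).trans hs
  have hw_xx : pds (pds (pdt^[k] w)) (x, 0) = k ! * deriv (deriv (α k)) x :=
    (hcoeff k).deriv.deriv_eq.trans (by simp only [deriv_const_mul_field'])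
  have hrec := mul_pdt_iterate_add_two hw hsol k
  rw [(hcoeff (k + n + 2)).eq_of_nhds, hw_xx] at hrec
  have hdesc : (k ! * (k + n).descFactorial n : ℝ) = (k + n)! := by
    have := Nat.factorial_mul_descFactorial (Nat.le_add_left n k)
    rw [Nat.add_sub_cancel] at this
    exact_mod_cast this
  have hfact : ((k + n + 2)! : ℝ) = (k + n + 2) * (k + n + 1) * (k + n)! := by
    simp only [Nat.factorial_succ]; push_cast; ring
  have hcancel : x ^ m * ((k + n + 2) * (k + n + 1) * α (k + n + 2) x) =
      -ε * deriv (deriv (α k)) x := by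
    refine mul_left_cancel₀ (Nat.cast_ne_zero.2 (k + n).factorial_ne_zero : ((k + n)! : ℝ) ≠ 0) ?_
    linear_combination hrec - x ^ m * α (k + n + 2) x * hfact - ε * deriv (deriv (α k)) x * hdesc
  have h₁ : (k + n + 1 : ℝ) ≠ 0 := by positivity
  have h₂ : (k + n + 2 : ℝ) ≠ 0 := by positivity
  rw [DopR]
  field_simp
  linear_combination hcancel

theorem coefficient_formula_general {m : ℕ} {S : Set ℝ} (hS : IsOpen S) (hS₀ : 0 ∉ S)
    (hw : ∀ x ∈ S, ContDiffAt ℝ ∞ w (x, 0))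
    (hsol : ∀ x ∈ S, ∀ᶠ y in 𝓝 0,
      x ^ m * pdt (pdt w) (x, y) + ε * y ^ n * pds (pds w) (x, y) = 0)
    {α : ℕ → ℝ → ℝ} (hα : ∀ j, ∀ x ∈ S, iteratedDeriv j (fun y => w (x, y)) 0 = j ! * α j x)
    (r p : ℕ) {x : ℝ} (hx : x ∈ S) :
    α (p * (n + 2) + r) x = (-ε) ^ p / recurrenceProd n r p * (DopR m)^[p] (α r) x :=
  eqOn_iterate_DopR_of_recurrence hS (fun k s hs => taylorCoeff_recurrence
    (ne_of_mem_of_not_mem hs hS₀) (hw s hs) (hsol s hs)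
    (fun j => mem_of_superset (hS.mem_nhds hs) (hα j)) k) r p hx

end DegenerateEquation

/-- formula \eqref{Orson}.
For an analytic solution `w = Σ_j α_j(x) y^j` of `x^m w_yy + ε y^n w_xx = 0` on the square,
`α_{p(n+2)} = ((−ε)^p/A^n_p) D^p α₀` and `α_{p(n+2)+1} = ((−ε)^p/B^n_p) D^p α₁`
for `0 < |x| < R`. -/
theorem coefficient_formula
    (m n : ℕ) (hm : 0 < m) (hn : 0 < n) (ε : ℝ) (hε : ε = 1 ∨ ε = -1)
    (R : ℝ) (hR : 0 < R)
    (w : ℝ × ℝ → ℝ)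
    (hw : AnalyticOnNhd ℝ w (Set.Ioo (-R) R ×ˢ Set.Ioo (-R) R))
    (hsol : ∀ p : ℝ × ℝ, |p.1| < R → |p.2| < R →
      p.1 ^ m * pdt (pdt w) p + ε * p.2 ^ n * pds (pds w) p = 0)
    (α : ℕ → ℝ → ℝ) (hα : ∀ j, AnalyticOnNhd ℝ (α j) (Set.Ioo (-R) R))
    (hexp : ∀ x y : ℝ, |x| < R → |y| < R → HasSum (fun j => α j x * y ^ j) (w (x, y)))
    :
    ∀ p : ℕ, ∀ x : ℝ, x ≠ 0 → |x| < R →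
      α (p * (n + 2)) x = (-ε) ^ p / (Acoef n p : ℝ) * (DopR m)^[p] (α 0) x ∧
      α (p * (n + 2) + 1) x = (-ε) ^ p / (Bcoef n p : ℝ) * (DopR m)^[p] (α 1) x := by
  have hnear : ∀ᶠ y in 𝓝 (0 : ℝ), |y| < R :=
    continuous_abs.continuousAt.eventually_lt_const (by simpa using hR)
  have hformula := coefficient_formula_general (S := Set.Ioo (-R) R \ {0})
    (isOpen_Ioo.sdiff isClosed_singleton) (by simp)
    (fun x hx => (hw (x, 0) ⟨hx.1, by simpa using hR⟩).contDiffAt)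
    (fun x hx => hnear.mono fun y hy => hsol (x, y) (abs_lt.2 hx.1) hy)
    (fun j x hx => iteratedDeriv_zero_of_eventually_hasSum
      (hnear.mono fun y hy => hexp x y (abs_lt.2 hx.1) hy) j)
  exact fun p x hx₀ hx =>
    ⟨recurrenceProd_zero_eq_Acoef n p ▸ hformula 0 p ⟨abs_lt.1 hx, hx₀⟩,
      recurrenceProd_one_eq_Bcoef n p ▸ hformula 1 p ⟨abs_lt.1 hx, hx₀⟩⟩
end
end
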